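/- Let K be a field admitting a Galois extension L/K whose Galois group Gal(L/K) is infinite of exponent dividing 2 (this holds, in particular, whenever K is Hilbertian), and let e be a positive integer. Equip Gal(K)^{2e} with its Haar probability measure μ. Then the set of pairs (σ, σ') ∈ Gal(K)^{2e} such that K_s(σ) and K_s(σ') are NOT elementarily equivalent as structures of the first-order language of rings with a constant symbol for each element of K has μ-measure 1. -/

import Mathlib

/-!
Write `A = Gal(L/K)`. Having exponent two, `A` is commutative, and finitely generated subgroups
of `A` are finite, hence closed.

If `K_s(σ)` and `K_s(σ')` are elementarily equivalent over `K`, then every polynomial over `K`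
with a root in one has a root in the other (`exists_root_of_elemEquivOver`). Let `H` be the
subgroup of `A` generated by the restrictions of the `σ i` and let `τ` be the restriction of
`σ' 0`. If `x ∈ L` is fixed by `H`, then the minimal polynomial of `x` over `K` has a root in
`K_s(σ')`; this root is `g x` for some `g ∈ A`, it is fixed by `τ`, and since `A` is commutative
`τ` fixes `x` too. By the Galois correspondence for the closed subgroup `H` it follows that
`τ ∈ H` (`restrict_mem_closure_of_elemEquivOver`), that is, `τ` is a product of powers of the
restrictions of the `σ i`.

For fixed exponents `a : Fin e → ℤ`, the pairs `(σ, σ')` satisfying `τ = ∏ i, (σ i)|_L ^ a i` form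
the kernel of a continuous homomorphism from `Gal(K)^{2e}` onto the infinite group `A`. Its fibres
are infinitely many disjoint translates of the kernel, so the kernel is a null set
(`measure_ker_eq_zero`). There are countably many `a`, so the elementarily equivalent pairs lie
in a null set. Working with a single such homomorphism at a time makes independence arguments and
Fubini's theorem unnecessary.
-/

open FirstOrder Language

/-- The natural interpretation of a field extension `M` of `K` as a structure of the
language of rings with a constant symbol for each element of `K`. -/
noncomputable def fieldStruct (K M : Type*) [Field K] [Field M] [Algebra K M] :
    (Language.ring[[K]]).Structure M :=
  letI : Language.ring.Structure M := (Ring.compatibleRingOfRing M).toStructure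
  letI : (constantsOn K).Structure M := constantsOn.structure (algebraMap K M)
  Language.sumStructure _ _ M

/-- Two field extensions of `K` are elementarily equivalent as structures of the
first-order language of rings with a constant symbol for each element of `K`. -/
noncomputable def ElemEquivOver (K M N : Type*) [Field K] [Field M] [Field N]
    [Algebra K M] [Algebra K N] : Prop :=
  @Language.ElementarilyEquivalent (Language.ring[[K]]) M N (fieldStruct K M) (fieldStruct K N)

/-- The fixed field of an `e`-tuple of `K`-automorphisms of `L`, as an intermediate
field of `L / K`. -/
def fixedSubfieldOf {K L : Type*} [Field K] [Field L] [Algebra K L] {e : ℕ}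
    (σ : Fin e → (L ≃ₐ[K] L)) : IntermediateField K L where
  carrier := {x | ∀ i, σ i x = x}
  mul_mem' := fun {a b} ha hb i => by rw [map_mul, ha i, hb i]
  add_mem' := fun {a b} ha hb i => by rw [map_add, ha i, hb i]
  algebraMap_mem' := fun a i => (σ i).commutes a
  inv_mem' := fun x hx i => by rw [map_inv₀, hx i]

open MeasureTheory

/-! ### Roots of polynomials in first-order logic -/

/-- A polynomial over `K` is represented by a term in one variable, uniformly in the field
extension in which the term is interpreted. -/
theorem exists_term_aeval {K : Type*} [Field K] (p : Polynomial K) :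
    ∃ t : (Language.ring[[K]]).Term (Empty ⊕ Fin 1),
      ∀ (M : Type*) [Field M] [Algebra K M] (v : Empty ⊕ Fin 1 → M),
        @Term.realize _ M (fieldStruct K M) _ v t = Polynomial.aeval (v (Sum.inr 0)) p := by
  induction p using Polynomial.induction_on with
  | C a =>
    refine ⟨Constants.term (Sum.inr a : (Language.ring[[K]]).Constants), ?_⟩
    intro M _ _ v
    let _ := fieldStruct K M
    rw [Polynomial.aeval_C]
    rfl
  | add p q hp hq =>
    obtain ⟨t, ht⟩ := hp
    obtain ⟨u, hu⟩ := hq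
    refine ⟨Functions.apply₂ (Sum.inl Ring.addFunc) t u, ?_⟩
    intro M _ _ v
    rw [map_add, ← ht, ← hu]
    rfl
  | monomial n a h =>
    obtain ⟨t, ht⟩ := h
    refine ⟨Functions.apply₂ (Sum.inl Ring.mulFunc) t (Term.var (Sum.inr 0)), ?_⟩
    intro M _ _ v
    rw [pow_succ, ← mul_assoc, map_mul, ← ht, Polynomial.aeval_X]
    rfl

theorem exists_root_of_elemEquivOver.{w} {K : Type*} {M N : Type w} [Field K] [Field M] [Field N]
    [Algebra K M] [Algebra K N] (h : ElemEquivOver K M N) (p : Polynomial K)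
    (hM : ∃ x : M, Polynomial.aeval x p = 0) : ∃ y : N, Polynomial.aeval y p = 0 := by
  obtain ⟨t, ht⟩ := exists_term_aeval p
  obtain ⟨z, hz⟩ := exists_term_aeval (0 : Polynomial K)
  have key : ∀ (P : Type w) [Field P] [Algebra K P],
      @Sentence.Realize _ P (fieldStruct K P) (Term.bdEqual t z).ex ↔
        ∃ x : P, Polynomial.aeval x p = 0 := by
    intro P _ _
    let _ := fieldStruct K P
    refine BoundedFormula.realize_ex.trans (exists_congr fun x => ?_)
    rw [BoundedFormula.realize_bdEqual, ht P, hz P, map_zero]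
    rfl
  exact (key N).1 (((@elementarilyEquivalent_iff _ M N (fieldStruct K M) (fieldStruct K N)).1
    h _).1 ((key M).2 hM))

/-! ### The restriction to an abelian subextension -/

theorem commute_of_mul_self {A : Type*} [Group A] (hA : ∀ a : A, a * a = 1) (a b : A) :
    a * b = b * a := by
  have hinv : ∀ c : A, c⁻¹ = c := fun c => inv_eq_of_mul_eq_one_left (hA c)
  rw [← hinv (a * b), mul_inv_rev, hinv, hinv]

/-- In a commutative group of exponent two the subgroup generated by finitely many elements is finite. -/
theorem finite_closure_range_of_mul_self {A : Type*} [CommGroup A] (hA : ∀ a : A, a * a = 1)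
    {e : ℕ} (τ : Fin e → A) : (Subgroup.closure (Set.range τ) : Set A).Finite := by
  have : Group.FG (Subgroup.closure (Set.range τ)) := Group.closure_finite_fg _
  have ht : IsMulTorsion (Subgroup.closure (Set.range τ)) := fun a =>
    isOfFinOrder_iff_pow_eq_one.2 ⟨2, two_pos, Subtype.ext (by simpa [pow_two] using hA a)⟩
  exact CommGroup.finite_of_fg_isMulTorsion _ ht

/-- If the fixed fields of `σ` and `σ'` are elementarily equivalent over `K`, then on a Galois
subextension `F` with group of exponent two each `σ' j` restricts to an element of the subgroup
generated by the restrictions of the `σ i`. -/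
theorem restrict_mem_closure_of_elemEquivOver {K E : Type*} [Field K] [Field E] [Algebra K E]
    (F : IntermediateField K E) [IsGalois K F] (hexp : ∀ τ : F ≃ₐ[K] F, τ * τ = 1)
    {e : ℕ} {σ σ' : Fin e → (E ≃ₐ[K] E)}
    (h : ElemEquivOver K (fixedSubfieldOf σ) (fixedSubfieldOf σ')) (j : Fin e) :
    AlgEquiv.restrictNormalHom F (σ' j) ∈
      Subgroup.closure (Set.range fun i => AlgEquiv.restrictNormalHom F (σ i)) := by
  have hcomm : ∀ a b : F ≃ₐ[K] F, a * b = b * a :=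
    fun a b => commute_of_mul_self hexp a b
  set H := Subgroup.closure (Set.range fun i => AlgEquiv.restrictNormalHom F (σ i)) with hH
  have hfin : (H : Set (F ≃ₐ[K] F)).Finite :=
    letI : CommGroup (F ≃ₐ[K] F) := { (inferInstance : Group (F ≃ₐ[K] F)) with mul_comm := hcomm }
    finite_closure_range_of_mul_self hexp _
  have hgal := InfiniteGalois.fixingSubgroup_fixedField (k := K) (K := F)
    ⟨H, hfin.isClosed⟩
  change _ = H at hgal
  rw [← hgal, IntermediateField.mem_fixingSubgroup_iff]
  intro x hx
  have hres : ∀ (s : E ≃ₐ[K] E) (z : F), ((AlgEquiv.restrictNormalHom F s z : F) : E) = s z :=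
    fun s z => AlgEquiv.restrictNormal_commutes s F z
  have hxσ : (x : E) ∈ fixedSubfieldOf σ := fun i => by
    rw [← hres]
    exact congrArg _ ((IntermediateField.mem_fixedField_iff _ _).1 hx _
      (Subgroup.subset_closure ⟨i, rfl⟩))
  obtain ⟨y, hy⟩ := exists_root_of_elemEquivOver h (minpoly K x) ⟨⟨x, hxσ⟩, by
    apply (algebraMap (fixedSubfieldOf σ) E).injective
    rw [← Polynomial.aeval_algebraMap_apply, map_zero]
    change Polynomial.aeval (algebraMap F E x) _ = 0
    rw [Polynomial.aeval_algebraMap_apply, minpoly.aeval, map_zero]⟩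
  have hyE : Polynomial.aeval (y : E) (minpoly K x) = 0 := by
    change Polynomial.aeval (algebraMap (fixedSubfieldOf σ') E y) _ = 0
    rw [Polynomial.aeval_algebraMap_apply, hy, map_zero]
  -- Normality of `F` places the root `y` inside `F`, as a conjugate of `x`.
  obtain ⟨z, hz⟩ : ∃ z : F, (z : E) = y := by
    have hs : ((minpoly K x).map (algebraMap K F)).Splits := Normal.splits inferInstance x
    have hne : minpoly K x ≠ 0 := minpoly.ne_zero (Algebra.IsIntegral.isIntegral x)
    have hmem : (y : E) ∈ (minpoly K x).rootSet E := Polynomial.mem_rootSet.2 ⟨hne, hyE⟩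
    rw [← hs.image_rootSet_algebraMap] at hmem
    exact hmem.imp fun z hz => hz.2
  have hz0 : Polynomial.aeval z (minpoly K x) = 0 := by
    apply (algebraMap F E).injective
    rw [← Polynomial.aeval_algebraMap_apply, map_zero]
    change Polynomial.aeval (z : E) _ = 0
    rw [hz, hyE]
  obtain ⟨g, hg⟩ := minpoly.exists_algEquiv_of_root' (Algebra.IsAlgebraic.isAlgebraic x) hz0
  have hfix : AlgEquiv.restrictNormalHom F (σ' j) z = z := by
    apply Subtype.ext
    rw [hres, hz]
    exact y.2 j
  apply g.injective
  rw [← AlgEquiv.mul_apply, hcomm, AlgEquiv.mul_apply, hg, hfix]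

/-! ### Null sets -/

/-- For a finite invariant measure, the kernel of a continuous homomorphism onto an infinite group
is a null set: its translates are infinitely many disjoint sets of the same measure. -/
theorem measure_ker_eq_zero {G A : Type*} [Group G] [TopologicalSpace G] [IsTopologicalGroup G]
    [MeasurableSpace G] [BorelSpace G] (μ : Measure G) [μ.IsMulLeftInvariant] [IsFiniteMeasure μ]
    [Group A] [TopologicalSpace A] [T1Space A] [Infinite A] (φ : G →* A) (hφ : Continuous φ)
    (hsurj : Function.Surjective φ) : μ (φ ⁻¹' {1}) = 0 := by
  by_contra h0
  have hfin := Measure.finite_const_le_meas_of_disjoint_iUnion μ (pos_iff_ne_zero.2 h0)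
    (As := fun a : A => φ ⁻¹' {a}) (fun a => (isClosed_singleton.preimage hφ).measurableSet)
    (fun a b hab => Disjoint.preimage _ (by simpa using hab)) (measure_ne_top _ _)
  refine Set.infinite_univ (hfin.subset fun a _ => ?_)
  obtain ⟨g, rfl⟩ := hsurj a
  have : φ ⁻¹' {φ g} = (fun x => g⁻¹ * x) ⁻¹' (φ ⁻¹' {1}) := by
    ext x
    rw [Set.mem_preimage, Set.mem_preimage, Set.mem_preimage, Set.mem_singleton_iff,
      Set.mem_singleton_iff, map_mul, map_inv, inv_mul_eq_one, eq_comm]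
  simp only [Set.mem_ofPred_eq]
  rw [this, measure_preimage_mul]

/-- Almost surely the fixed fields of two tuples are not elementarily equivalent, given a Galois
subextension `F` with infinite group of exponent two. -/
theorem measure_elemEquivOver_eq_zero {K E : Type*} [Field K] [Field E] [Algebra K E]
    [IsGalois K E] (F : IntermediateField K E) [IsGalois K F] [Infinite (F ≃ₐ[K] F)]
    (hexp : ∀ τ : F ≃ₐ[K] F, τ * τ = 1) {e : ℕ} (he : 0 < e)
    [MeasurableSpace ((Fin e → (E ≃ₐ[K] E)) × (Fin e → (E ≃ₐ[K] E)))]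
    [BorelSpace ((Fin e → (E ≃ₐ[K] E)) × (Fin e → (E ≃ₐ[K] E)))]
    (μ : Measure ((Fin e → (E ≃ₐ[K] E)) × (Fin e → (E ≃ₐ[K] E))))
    [μ.IsMulLeftInvariant] [IsFiniteMeasure μ] :
    μ {p | ElemEquivOver K (fixedSubfieldOf p.1) (fixedSubfieldOf p.2)} = 0 := by
  have hcomm : ∀ a b : F ≃ₐ[K] F, a * b = b * a :=
    fun a b => commute_of_mul_self hexp a b
  let _ : CommGroup (F ≃ₐ[K] F) := { (inferInstance : Group (F ≃ₐ[K] F)) with mul_comm := hcomm }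
  let j : Fin e := ⟨0, he⟩
  let r : (E ≃ₐ[K] E) →* (F ≃ₐ[K] F) := AlgEquiv.restrictNormalHom F
  have hr : Continuous r := InfiniteGalois.restrictNormalHom_continuous F
  have hrs : Function.Surjective r := AlgEquiv.restrictNormalHom_surjective E
  let φ (a : Fin e → ℤ) : (Fin e → (E ≃ₐ[K] E)) × (Fin e → (E ≃ₐ[K] E)) →* (F ≃ₐ[K] F) :=
    { toFun := fun p => r (p.2 j) * (∏ i, r (p.1 i) ^ a i)⁻¹
      map_one' := by simp
      map_mul' := fun p q => by
        simp only [Prod.fst_mul, Prod.snd_mul, Pi.mul_apply, map_mul, mul_zpow,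
          Finset.prod_mul_distrib, mul_inv]
        exact mul_mul_mul_comm _ _ _ _ }
  refine measure_mono_null (t := ⋃ a, φ a ⁻¹' {1}) (fun p hp => ?_)
    (measure_iUnion_null fun a => measure_ker_eq_zero μ (φ a) ?_ fun g => ?_)
  · obtain ⟨a, ha⟩ := Subgroup.mem_closure_range_iff_of_fintype.1
      (restrict_mem_closure_of_elemEquivOver F hexp hp j)
    exact Set.mem_iUnion.2 ⟨a, mul_inv_eq_one.2 ha⟩
  · change Continuous fun p : (Fin e → (E ≃ₐ[K] E)) × (Fin e → (E ≃ₐ[K] E)) =>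
      r (p.2 j) * (∏ i, r (p.1 i) ^ a i)⁻¹
    fun_prop
  · obtain ⟨s, rfl⟩ := hrs g
    exact ⟨(1, fun _ => s), by simp [φ]⟩

/-- **Theorem (Statement 10).** Let `K` be a field admitting a Galois extension `L/K`
whose Galois group is infinite of exponent dividing `2` (as holds whenever `K` is
Hilbertian), and let `e` be a positive integer.  With respect to the Haar probability
measure on `Gal(K)^{2e}`, the set of pairs `(σ, σ′)` such that the fixed fields
`K_s(σ)` and `K_s(σ′)` are not elementarily equivalent (in the language of rings with a
constant for each element of `K`) has measure one. -/
theorem haar_measure_one_nonequivalent_fixed_fields_of_infinite_exponent_two_galois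
    (K : Type*) [Field K] (e : ℕ) (he : 0 < e)
    (L : Type*) [Field L] [Algebra K L] [IsGalois K L]
    [Infinite (L ≃ₐ[K] L)] (hexp : ∀ τ : L ≃ₐ[K] L, τ * τ = 1)
    [MeasurableSpace ((Fin e → (↥(separableClosure K (AlgebraicClosure K)) ≃ₐ[K]
        ↥(separableClosure K (AlgebraicClosure K)))) ×
      (Fin e → (↥(separableClosure K (AlgebraicClosure K)) ≃ₐ[K]
        ↥(separableClosure K (AlgebraicClosure K)))))]
    [BorelSpace ((Fin e → (↥(separableClosure K (AlgebraicClosure K)) ≃ₐ[K]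
        ↥(separableClosure K (AlgebraicClosure K)))) ×
      (Fin e → (↥(separableClosure K (AlgebraicClosure K)) ≃ₐ[K]
        ↥(separableClosure K (AlgebraicClosure K)))))]
    (μ : Measure ((Fin e → (↥(separableClosure K (AlgebraicClosure K)) ≃ₐ[K]
        ↥(separableClosure K (AlgebraicClosure K)))) ×
      (Fin e → (↥(separableClosure K (AlgebraicClosure K)) ≃ₐ[K]
        ↥(separableClosure K (AlgebraicClosure K))))))
    [μ.IsHaarMeasure] [IsProbabilityMeasure μ] :
    μ {p : (Fin e → (↥(separableClosure K (AlgebraicClosure K)) ≃ₐ[K]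
        ↥(separableClosure K (AlgebraicClosure K)))) ×
      (Fin e → (↥(separableClosure K (AlgebraicClosure K)) ≃ₐ[K]
        ↥(separableClosure K (AlgebraicClosure K)))) |
      ¬ElemEquivOver K ↥(fixedSubfieldOf p.1) ↥(fixedSubfieldOf p.2)} = 1 := by
  let E := separableClosure K (AlgebraicClosure K)
  let ι : L →ₐ[K] E := IsSepClosed.lift
  -- The image of `L` in the separable closure.
  let F : IntermediateField K E := ι.fieldRange
  let ε : L ≃ₐ[K] F := AlgEquiv.ofInjectiveField ι
  have : IsGalois K F := IsGalois.of_algEquiv ε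
  have : Infinite (F ≃ₐ[K] F) := Infinite.of_injective _ (AlgEquiv.autCongr ε).injective
  have hF : ∀ τ : F ≃ₐ[K] F, τ * τ = 1 := fun τ => by
    obtain ⟨s, rfl⟩ := (AlgEquiv.autCongr ε).surjective τ
    rw [← map_mul, hexp, map_one]
  have hnull := measure_elemEquivOver_eq_zero F hF he μ
  refine le_antisymm prob_le_one ?_
  rw [← measure_univ (μ := μ), ← Set.union_compl_self
    {p : (Fin e → (E ≃ₐ[K] E)) × (Fin e → (E ≃ₐ[K] E)) |
      ElemEquivOver K (fixedSubfieldOf p.1) (fixedSubfieldOf p.2)}]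
  refine (measure_union_le _ _).trans ?_
  rw [hnull, zero_add]
  rfl
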